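/- Fix n ≥ 3 and topologize the set of nonzero real homogeneous polynomials of degree n in x, y, z by their coefficients. Call such a polynomial Φ real-smooth if there is no p ∈ ℝ³∖{0} with Φ(p) = 0 and ∇Φ(p) = 0, and complex-smooth if there is no q ∈ ℂ³∖{0} with Φ(q) = 0 and ∇Φ(q) = 0. Then the complex-smooth polynomials are dense in the set of real-smooth ones; moreover, every connected component of the set of real-smooth polynomials of degree n contains complex-smooth points, and its set of complex-smooth points is connected, so each connected component of the real-smooth locus determines a unique connected component of the complex-smooth locus. -/

import Mathlib

open MvPolynomial

noncomputable section

/-- The standard topology on real polynomials in three variables, by coefficients. -/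
instance : TopologicalSpace (MvPolynomial (Fin 3) ℝ) :=
  TopologicalSpace.induced (fun Φ d => MvPolynomial.coeff d Φ) inferInstance

/-- `Φ` is real-smooth: there is no `p ∈ ℝ³ ∖ {0}` with `Φ(p) = 0` and `∇Φ(p) = 0`. -/
def RealSmooth (Φ : MvPolynomial (Fin 3) ℝ) : Prop :=
  ¬ ∃ p : Fin 3 → ℝ, p ≠ 0 ∧ eval p Φ = 0 ∧ ∀ i, eval p (pderiv i Φ) = 0

/-- `Φ` is complex-smooth: there is no `q ∈ ℂ³ ∖ {0}` with `Φ(q) = 0` and `∇Φ(q) = 0`,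
where `Φ` is applied to complex arguments via its complexification. -/
def ComplexSmooth (Φ : MvPolynomial (Fin 3) ℝ) : Prop :=
  ¬ ∃ q : Fin 3 → ℂ, q ≠ 0 ∧ eval q (MvPolynomial.map (algebraMap ℝ ℂ) Φ) = 0 ∧
    ∀ i, eval q (pderiv i (MvPolynomial.map (algebraMap ℝ ℂ) Φ)) = 0

/-- The set of nonzero real-smooth homogeneous polynomials of degree `n`. -/
def RSset (n : ℕ) : Set ↥(homogeneousSubmodule (Fin 3) ℝ n) :=
  {Φ | (Φ : MvPolynomial (Fin 3) ℝ) ≠ 0 ∧ RealSmooth (Φ : MvPolynomial (Fin 3) ℝ)}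

/-- The set of nonzero complex-smooth homogeneous polynomials of degree `n`. -/
def CSset (n : ℕ) : Set ↥(homogeneousSubmodule (Fin 3) ℝ n) :=
  {Φ | (Φ : MvPolynomial (Fin 3) ℝ) ≠ 0 ∧ ComplexSmooth (Φ : MvPolynomial (Fin 3) ℝ)}

/-!
A real form that is singular at a point `q` of `ℂ^m` but at no real point is singular only at
points that are not complex multiples of real ones, and a real linear change of coordinates moves
such a `q` to `e_i + √-1 e_j`. In degree `n ≥ 3` the gradients at that point of the real forms fill
`ℂ^m`, so the forms singular there have real codimension `2m`. Letting `q` vary projectively gives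
back `2(m - 1)` parameters: the forms that are real-smooth but not complex-smooth are covered by
smooth families of codimension two. The union of the lines joining a fixed point to such families
still has dense complement, so any two points of a ball outside these families are joined through a
generic third one; hence removing the families from a connected open set leaves it connected.
-/

section Topology

open Topology

variable {X : Type*} [TopologicalSpace X]

lemma isPreconnected_inter_of_subset_closure {U G : Set X} (hU : IsPreconnected U)
    (hUG : U ⊆ closure G) (hloc : ∀ x ∈ U, ∃ C ∈ 𝓝 x, C ⊆ U ∧ IsPreconnected (C ∩ G)) :
    IsPreconnected (U ∩ G) := by
  rw [isPreconnected_iff_subset_of_disjoint] at hU ⊢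
  intro u v hu hv huv hdisj
  have hUo : IsOpen U := isOpen_iff_mem_nhds.2 fun x hx ↦
    let ⟨_, hC, hCU, _⟩ := hloc x hx
    Filter.mem_of_superset hC hCU
  have hcover : U ⊆ interior (Gᶜ ∪ u) ∪ interior (Gᶜ ∪ v) := by
    intro x hx
    obtain ⟨C, hC, hCU, hCG⟩ := hloc x hx
    have hCGU : C ∩ G ⊆ U ∩ G := Set.inter_subset_inter_left G hCU
    have hint (w : Set X) (h : C ∩ G ⊆ w) : x ∈ interior (Gᶜ ∪ w) :=
      mem_interior_iff_mem_nhds.2 <| Filter.mem_of_superset hC fun y hy ↦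
        or_iff_not_imp_left.2 fun hyG ↦ h ⟨hy, not_not.1 hyG⟩
    exact (isPreconnected_iff_subset_of_disjoint.1 hCG u v hu hv (hCGU.trans huv)
      (Set.subset_eq_empty (Set.inter_subset_inter_left _ hCGU) hdisj)).imp (hint u) (hint v)
  have hmeet : U ∩ (interior (Gᶜ ∪ u) ∩ interior (Gᶜ ∪ v)) = ∅ := by
    refine Set.eq_empty_of_forall_notMem fun x hx ↦ ?_
    obtain ⟨y, ⟨hyU, hyu, hyv⟩, hyG⟩ := mem_closure_iff.1 (hUG hx.1) _
      (hUo.inter (isOpen_interior.inter isOpen_interior)) hx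
    exact hdisj.subset ⟨⟨hyU, hyG⟩, (interior_subset hyu).resolve_left (not_not_intro hyG),
      (interior_subset hyv).resolve_left (not_not_intro hyG)⟩
  refine (hU _ _ isOpen_interior isOpen_interior hcover hmeet).imp ?_ ?_ <;>
  exact fun h y hy ↦ (interior_subset (h hy.1)).resolve_left (not_not_intro hy.2)

lemma connectedComponentIn_preimage_homeomorph {Y : Type*} [TopologicalSpace Y] (e : X ≃ₜ Y)
    {S : Set Y} {x : X} (hx : x ∈ e ⁻¹' S) :
    connectedComponentIn (e ⁻¹' S) x = e ⁻¹' connectedComponentIn S (e x) := by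
  rw [← e.preimage_image (connectedComponentIn _ x), e.image_connectedComponentIn hx,
    e.image_preimage]

end Topology

section Codimension

open Module

variable {E : Type*} [NormedAddCommGroup E] [NormedSpace ℝ E] [FiniteDimensional ℝ E]
  {ι : Type*} [Countable ι] {P : ι → Type*} [∀ k, NormedAddCommGroup (P k)]
  [∀ k, NormedSpace ℝ (P k)] [∀ k, FiniteDimensional ℝ (P k)] {F : ∀ k, P k → E}

lemma dense_compl_iUnion_range (hF : ∀ k, ContDiff ℝ 1 (F k))
    (hP : ∀ k, finrank ℝ (P k) < finrank ℝ E) : Dense (⋃ k, Set.range (F k))ᶜ := by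
  rcases isEmpty_or_nonempty ι with _ | ⟨⟨k₀⟩⟩
  · simp
  apply dense_compl_of_dimH_lt_finrank
  calc dimH (⋃ k, Set.range (F k)) ≤ (finrank ℝ E - 1 : ℕ) := by
        rw [dimH_iUnion]
        exact iSup_le fun k ↦ (hF k).dimH_range_le.trans <|
          Nat.cast_le.2 (Nat.le_sub_one_of_lt (hP k))
    _ < finrank ℝ E := Nat.cast_lt.2 (Nat.sub_one_lt_of_lt (hP k₀))

/-- The lines joining `f` to the points of the `F k` sweep out only one more dimension, so a
generic `h` can be joined to two given points by segments avoiding `B`. -/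
lemma convex_isPreconnected_diff {B C : Set E} (hC : Convex ℝ C) (hCo : IsOpen C)
    (hF : ∀ k, ContDiff ℝ 1 (F k)) (hP : ∀ k, finrank ℝ (P k) + 1 < finrank ℝ E)
    (hB : B ⊆ ⋃ k, Set.range (F k)) : IsPreconnected (C \ B) := by
  refine isPreconnected_of_forall_pair fun f ⟨hfC, hfB⟩ g ⟨hgC, hgB⟩ ↦ ?_
  let cone (k : Bool × ι) (x : P k.2 × ℝ) : E :=
    AffineMap.lineMap (bif k.1 then f else g) (F k.2 x.1) x.2
  have hcone (k : Bool × ι) : ContDiff ℝ 1 (cone k) := by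
    have := (hF k.2).comp (contDiff_fst (F := ℝ))
    simp only [cone, AffineMap.lineMap_apply_module]
    fun_prop
  have hdense : Dense (⋃ k, Set.range (cone k))ᶜ :=
    dense_compl_iUnion_range hcone fun k ↦ by simpa using hP k.2
  obtain ⟨h, hhC, hh⟩ := hdense.inter_open_nonempty C hCo ⟨f, hfC⟩
  have hsegment (b : Bool) (hb : (bif b then f else g) ∈ C \ B) :
      segment ℝ (bif b then f else g) h ⊆ C \ B := by
    refine fun y hy ↦ ⟨hC.segment_subset hb.1 hhC hy, fun hyB ↦ hh ?_⟩
    rw [segment_eq_image_lineMap] at hy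
    obtain ⟨t, -, rfl⟩ := hy
    obtain ⟨k, p, hp⟩ := Set.mem_iUnion.1 (hB hyB)
    have ht : t ≠ 0 := by
      rintro rfl
      exact hb.2 (by simpa using hyB)
    refine Set.mem_iUnion.2 ⟨(b, k), (p, t⁻¹), ?_⟩
    simp [cone, hp, AffineMap.lineMap_apply, smul_smul, inv_mul_cancel₀ ht]
  refine ⟨segment ℝ f h ∪ segment ℝ g h,
    Set.union_subset (hsegment true ⟨hfC, hfB⟩) (hsegment false ⟨hgC, hgB⟩),
    .inl (left_mem_segment ℝ f h), .inr (left_mem_segment ℝ g h), ?_⟩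
  exact (convex_segment f h).isPreconnected.union h (right_mem_segment ℝ f h)
    (right_mem_segment ℝ g h) (convex_segment g h).isPreconnected

lemma subset_closure_diff_of_subset_iUnion_range {B U : Set E} (hU : IsOpen U)
    (hF : ∀ k, ContDiff ℝ 1 (F k)) (hP : ∀ k, finrank ℝ (P k) < finrank ℝ E)
    (hB : B ⊆ ⋃ k, Set.range (F k)) : U ⊆ closure (U \ B) :=
  ((dense_compl_iUnion_range hF hP).mono
    (Set.compl_subset_compl.2 hB)).open_subset_closure_inter hU

theorem isPreconnected_diff_of_subset_iUnion_range {B U : Set E} (hU : IsPreconnected U)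
    (hUo : IsOpen U) (hF : ∀ k, ContDiff ℝ 1 (F k))
    (hP : ∀ k, finrank ℝ (P k) + 1 < finrank ℝ E) (hB : B ⊆ ⋃ k, Set.range (F k)) :
    IsPreconnected (U \ B) := by
  refine isPreconnected_inter_of_subset_closure hU
    ((subset_closure_diff_of_subset_iUnion_range hUo hF
      (fun k ↦ (Nat.lt_succ_self _).trans (hP k)) hB).trans
      (closure_mono fun _ hx ↦ hx.2)) fun x hx ↦ ?_
  obtain ⟨ε, hε, hball⟩ := Metric.isOpen_iff.1 hUo x hx
  exact ⟨Metric.ball x ε, Metric.ball_mem_nhds x hε, hball,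
    convex_isPreconnected_diff (convex_ball x ε) Metric.isOpen_ball hF hP hB⟩

end Codimension

section Singular

variable {σ R A B : Type*} [CommSemiring R] [CommSemiring A] [Algebra R A]
  [CommSemiring B] [Algebra R B]

/-- The gradient of `P` at a point `q` with coordinates in an algebra, as a function of `P`. -/
def gradientAt (q : σ → A) : MvPolynomial σ R →ₗ[R] σ → A :=
  LinearMap.pi fun a ↦ (aeval q).toLinearMap ∘ₗ (pderiv a).toLinearMap

@[simp]
lemma gradientAt_apply (q : σ → A) (P : MvPolynomial σ R) (a : σ) :
    gradientAt q P a = aeval q (pderiv a P) := rfl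

lemma gradientAt_C (q : σ → A) (r : R) : gradientAt q (C r) = 0 := by
  ext a
  simp

lemma gradientAt_mul (q : σ → A) (P Q : MvPolynomial σ R) :
    gradientAt q (P * Q) = aeval q P • gradientAt q Q + aeval q Q • gradientAt q P := by
  ext a
  simp [Derivation.leibniz]

lemma gradientAt_X_pow [DecidableEq σ] (q : σ → A) (i : σ) (p : ℕ) :
    gradientAt q (X i ^ p : MvPolynomial σ R) = Pi.single i (p * q i ^ (p - 1)) := by
  ext a
  rcases eq_or_ne i a with rfl | h
  · simp
  · simp [h, h.symm]

lemma gradientAt_X [DecidableEq σ] (q : σ → A) (i : σ) :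
    gradientAt q (X i : MvPolynomial σ R) = Pi.single i 1 := by
  simpa using gradientAt_X_pow (R := R) q i 1

lemma gradientAt_bind₁ {τ : Type*} [Fintype σ] (q : τ → A) (L : σ → MvPolynomial τ R)
    (P : MvPolynomial σ R) :
    gradientAt q (bind₁ L P) =
      ∑ a, gradientAt (fun b ↦ aeval q (L b)) P a • gradientAt q (L a) := by
  classical
  induction P using MvPolynomial.induction_on with
  | C r => simp [gradientAt_C]
  | add P Q hP hQ => simp only [map_add, hP, hQ, Pi.add_apply, add_smul, Finset.sum_add_distrib]
  | mul_X P i hP =>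
    simp only [map_mul, bind₁_X_right, gradientAt_mul, hP, aeval_bind₁, gradientAt_X, Pi.add_apply,
      Pi.smul_apply, Pi.single_apply, add_smul, Finset.sum_add_distrib, Finset.smul_sum,
      smul_eq_mul, mul_smul]
    simp

/-- `q` is a zero of `P` together with all its partial derivatives. -/
def IsSingularAt (P : MvPolynomial σ R) (q : σ → A) : Prop :=
  aeval q P = 0 ∧ gradientAt q P = 0

lemma isSingularAt_iff {P : MvPolynomial σ R} {q : σ → A} :
    IsSingularAt P q ↔ aeval q P = 0 ∧ ∀ a, aeval q (pderiv a P) = 0 :=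
  and_congr_right' _root_.funext_iff

lemma aeval_smul_of_isHomogeneous {P : MvPolynomial σ R} {n : ℕ} (hP : P.IsHomogeneous n) (r : A)
    (q : σ → A) : aeval (r • q) P = r ^ n * aeval q P := by
  simp only [aeval_def, eval₂_eq, Finset.mul_sum]
  refine Finset.sum_congr rfl fun d hd ↦ ?_
  have hdeg : ∑ a ∈ d.support, d a = n := by
    by_contra h
    exact mem_support_iff.1 hd (hP.coeff_eq_zero h)
  simp only [Pi.smul_apply, smul_eq_mul, mul_pow, Finset.prod_mul_distrib,
    Finset.prod_pow_eq_pow_sum, hdeg]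
  ring

lemma isSingularAt_smul {P : MvPolynomial σ R} {n : ℕ} (hP : P.IsHomogeneous n) {q : σ → A}
    (hq : IsSingularAt P q) (r : A) : IsSingularAt P (r • q) := by
  refine ⟨by rw [aeval_smul_of_isHomogeneous hP, hq.1, mul_zero], ?_⟩
  ext a
  have hqa : aeval q (pderiv a P) = 0 := congrFun hq.2 a
  rw [gradientAt_apply, aeval_smul_of_isHomogeneous hP.pderiv, hqa, mul_zero, Pi.zero_apply]

lemma isSingularAt_algebraMap_iff [Algebra A B] [IsScalarTower R A B] [FaithfulSMul A B]
    {P : MvPolynomial σ R} {q : σ → A} :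
    IsSingularAt P (fun a ↦ algebraMap A B (q a)) ↔ IsSingularAt P q := by
  have hzero (Q : MvPolynomial σ R) :
      aeval (fun a ↦ algebraMap A B (q a)) Q = 0 ↔ aeval q Q = 0 :=
    aeval_algebraMap_eq_zero_iff_of_injective B (FaithfulSMul.algebraMap_injective A B)
  simp only [isSingularAt_iff, hzero]

variable (A) in
/-- `P` has no singular point other than the origin with coordinates in `A`. -/
def IsSmoothOver (P : MvPolynomial σ R) : Prop :=
  ∀ q : σ → A, IsSingularAt P q → q = 0

lemma ne_zero_of_isSmoothOver [Nonempty σ] [Nontrivial A] {P : MvPolynomial σ R}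
    (hP : IsSmoothOver A P) : P ≠ 0 := by
  rintro rfl
  exact one_ne_zero (hP 1 ⟨map_zero _, map_zero _⟩)

end Singular

section Coefficients

variable {σ : Type*} {n : ℕ}

/-- The exponents of the monomials of degree `n`; the form with coefficients
`c : DegreeExponent σ n → ℝ` is `form n c`. -/
abbrev DegreeExponent (σ : Type*) (n : ℕ) := {d : σ →₀ ℕ // d.degree = n}

/-- The coefficients of a polynomial in degree `n`. -/
def formCoeff (n : ℕ) : MvPolynomial σ ℝ →ₗ[ℝ] DegreeExponent σ n → ℝ :=
  LinearMap.pi fun d ↦ lcoeff ℝ d.1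

@[simp]
lemma formCoeff_apply (P : MvPolynomial σ ℝ) (d : DegreeExponent σ n) :
    formCoeff n P d = coeff d.1 P := rfl

variable [Finite σ]

instance : Fintype (DegreeExponent σ n) :=
  (Finsupp.finite_of_degree_eq n).fintype

/-- The form of degree `n` with given coefficients. -/
def form (n : ℕ) : (DegreeExponent σ n → ℝ) →ₗ[ℝ] MvPolynomial σ ℝ :=
  Fintype.linearCombination ℝ fun d ↦ monomial d.1 1

lemma form_apply (c : DegreeExponent σ n → ℝ) : form n c = ∑ d, c d • monomial d.1 1 := rfl

lemma isHomogeneous_form (c : DegreeExponent σ n → ℝ) : (form n c).IsHomogeneous n := by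
  rw [form_apply]
  refine IsHomogeneous.sum _ _ _ fun d _ ↦ ?_
  rw [smul_monomial]
  exact isHomogeneous_monomial _ d.2

@[simp]
lemma formCoeff_form (c : DegreeExponent σ n → ℝ) : formCoeff n (form n c) = c := by
  classical
  ext d
  simp [form_apply, coeff_sum, coeff_monomial, Subtype.val_inj]

lemma form_formCoeff {P : MvPolynomial σ ℝ} (hP : P.IsHomogeneous n) :
    form n (formCoeff n P) = P := by
  ext d
  by_cases hd : d.degree = n
  · exact congrFun (formCoeff_form (formCoeff n P)) ⟨d, hd⟩
  · rw [hP.coeff_eq_zero hd, (isHomogeneous_form _).coeff_eq_zero hd]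

lemma range_form : LinearMap.range (form (σ := σ) n) = homogeneousSubmodule σ ℝ n := by
  refine le_antisymm (LinearMap.range_le_iff_comap.2 ?_) fun P hP ↦ ⟨_, form_formCoeff hP⟩
  exact Submodule.eq_top_iff'.2 isHomogeneous_form

lemma continuous_aeval_form {K : Type*} [CommSemiring K] [Algebra ℝ K] [TopologicalSpace K]
    [IsTopologicalSemiring K] [ContinuousSMul ℝ K]
    (D : MvPolynomial σ ℝ →ₗ[ℝ] MvPolynomial σ ℝ) :
    Continuous fun x : (σ → K) × (DegreeExponent σ n → ℝ) ↦ aeval x.1 (D (form n x.2)) := by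
  simp only [form_apply, map_sum, map_smul, aeval_def, eval₂_eq]
  fun_prop

lemma isClosed_isSingularAt_form {K : Type*} [CommSemiring K] [Algebra ℝ K] [TopologicalSpace K]
    [T2Space K] [IsTopologicalSemiring K] [ContinuousSMul ℝ K] :
    IsClosed {x : (σ → K) × (DegreeExponent σ n → ℝ) | IsSingularAt (form n x.2) x.1} :=
  (isClosed_eq (continuous_aeval_form LinearMap.id) continuous_const).and
    (isClosed_eq (continuous_pi fun a ↦ continuous_aeval_form (pderiv a).toLinearMap)
      continuous_const)

lemma continuous_coeff_form (d : σ →₀ ℕ) :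
    Continuous fun c : DegreeExponent σ n → ℝ ↦ coeff d (form n c) := by
  simp only [form_apply, coeff_sum, coeff_smul]
  fun_prop

variable (σ n) in
/-- The coefficient vectors of the forms of degree `n` that are smooth over `A`. -/
def smoothForms (A : Type*) [CommSemiring A] [Algebra ℝ A] : Set (DegreeExponent σ n → ℝ) :=
  {c | IsSmoothOver A (form n c)}

/-- By homogeneity it suffices to look at singular points on the compact unit sphere. -/
lemma isOpen_smoothForms (K : Type*) [RCLike K] : IsOpen (smoothForms σ n K) := by
  cases nonempty_fintype σ
  let Z : Set (Metric.sphere (0 : σ → K) 1 × (DegreeExponent σ n → ℝ)) :=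
    Prod.map Subtype.val id ⁻¹' {x | IsSingularAt (form n x.2) x.1}
  have hZ : IsClosed Z :=
    isClosed_isSingularAt_form.preimage (continuous_subtype_val.prodMap continuous_id)
  have hcompl : (smoothForms σ n K)ᶜ = Prod.snd '' Z := by
    ext c
    simp only [smoothForms, IsSmoothOver, Set.mem_compl_iff, Set.mem_ofPred_eq, not_forall,
      Set.mem_image]
    constructor
    · rintro ⟨q, hq, hq0⟩
      have hnorm : ((‖q‖⁻¹ : ℝ) : K) • q ∈ Metric.sphere (0 : σ → K) 1 := by
        simp [norm_smul, inv_mul_cancel₀ (norm_ne_zero_iff.2 hq0)]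
      exact ⟨(⟨_, hnorm⟩, c), isSingularAt_smul (isHomogeneous_form c) hq _, rfl⟩
    · rintro ⟨⟨q, c⟩, hq, rfl⟩
      exact ⟨q, hq, ne_zero_of_mem_unit_sphere q⟩
  rw [← isClosed_compl_iff, hcompl]
  exact isClosedMap_snd_of_compactSpace Z hZ

end Coefficients

section DimensionCount

variable {σ : Type*} [DecidableEq σ] {i j : σ} {n : ℕ}

/-- The point `e_i + √-1 e_j`, to which a real linear change of coordinates brings any point that
is not a complex multiple of a real one. -/
def basePoint (i j : σ) : σ → ℂ := Pi.single i 1 + Pi.single j Complex.I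

lemma basePoint_left (hij : i ≠ j) : basePoint i j i = 1 := by
  simp [basePoint, hij]

lemma basePoint_right (hij : i ≠ j) : basePoint i j j = Complex.I := by
  simp [basePoint, hij.symm]

lemma basePoint_of_ne {k : σ} (hki : k ≠ i) (hkj : k ≠ j) : basePoint i j k = 0 := by
  simp [basePoint, hki, hkj]

lemma gradientAt_basePoint_X_pow_mul_X_pow (hij : i ≠ j) (p r : ℕ) :
    gradientAt (basePoint i j) (X i ^ p * X j ^ r : MvPolynomial σ ℝ) =
      Pi.single i (p * Complex.I ^ r) + Pi.single j (r * Complex.I ^ (r - 1)) := by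
  simp [gradientAt_mul, gradientAt_X_pow, basePoint_left hij, basePoint_right hij,
    ← Pi.single_smul, mul_comm, add_comm]

lemma gradientAt_basePoint_X_pow_mul_X_pow_mul_X (hij : i ≠ j) {k : σ} (hki : k ≠ i) (hkj : k ≠ j)
    (p r : ℕ) :
    gradientAt (basePoint i j) (X i ^ p * X j ^ r * X k : MvPolynomial σ ℝ) =
      Pi.single k (Complex.I ^ r) := by
  simp [gradientAt_mul, gradientAt_X, basePoint_left hij, basePoint_right hij,
    basePoint_of_ne hki hkj, ← Pi.single_smul]

lemma single_mem_of_single_one_mem_of_single_I_mem {S : Submodule ℝ (σ → ℂ)} {k : σ}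
    (h1 : Pi.single k 1 ∈ S) (hI : Pi.single k Complex.I ∈ S) (z : ℂ) : Pi.single k z ∈ S := by
  have := S.add_mem (S.smul_mem z.re h1) (S.smul_mem z.im hI)
  rwa [← Pi.single_smul, ← Pi.single_smul, ← Pi.single_add, Complex.real_smul, Complex.real_smul,
    mul_one, Complex.re_add_im] at this

/-- The four gradients of `x_i ^ (n - r) x_j ^ r`, `r ≤ 3`, span the two complex coordinate lines
over `ℝ`. -/
lemma single_mem_map_gradientAt_basePoint_pair (hn : 3 ≤ n) (hij : i ≠ j) (z : ℂ) :
    Pi.single i z ∈ (homogeneousSubmodule σ ℝ n).map (gradientAt (basePoint i j)) ∧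
      Pi.single j z ∈ (homogeneousSubmodule σ ℝ n).map (gradientAt (basePoint i j)) := by
  obtain ⟨N, rfl⟩ := Nat.exists_eq_add_of_le' hn
  set S := (homogeneousSubmodule σ ℝ (N + 3)).map (gradientAt (basePoint i j))
  have hgrad (p r : ℕ) (h : p + r = N + 3) :
      Pi.single i (p * Complex.I ^ r) + Pi.single j (r * Complex.I ^ (r - 1)) ∈ S :=
    gradientAt_basePoint_X_pow_mul_X_pow hij p r ▸ Submodule.mem_map_of_mem
      (h ▸ (isHomogeneous_X_pow i p).mul (isHomogeneous_X_pow j r))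
  have hi1 : Pi.single i 1 ∈ S := by
    rw [← S.smul_mem_iff (show (N + 3 : ℝ) ≠ 0 by positivity)]
    convert hgrad (N + 3) 0 rfl using 1
    ext a
    simp [Pi.single_apply]
  have hiI : Pi.single i Complex.I ∈ S := by
    rw [← S.smul_mem_iff (show (2 * N + 6 : ℝ) ≠ 0 by positivity)]
    convert S.add_mem (S.smul_mem 3 (hgrad (N + 2) 1 rfl)) (hgrad N 3 rfl) using 1
    ext a
    simp only [Pi.add_apply, Pi.smul_apply, Pi.single_apply, smul_ite, smul_add, smul_zero,
      Complex.real_smul, Complex.I_pow_three, Nat.reduceSub, Complex.I_sq]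
    push_cast
    split_ifs <;> ring
  have hj1 : Pi.single j 1 ∈ S := by
    convert S.sub_mem (hgrad (N + 2) 1 rfl) (S.smul_mem (N + 2 : ℝ) hiI) using 1
    ext a
    simp [Pi.single_apply]
  have hjI : Pi.single j Complex.I ∈ S := by
    rw [← S.smul_mem_iff (two_ne_zero : (2 : ℝ) ≠ 0)]
    convert S.add_mem (hgrad (N + 1) 2 rfl) (S.smul_mem (N + 1 : ℝ) hi1) using 1
    ext a
    simp only [Pi.add_apply, Pi.smul_apply, Pi.single_apply, smul_ite, smul_zero,
      Complex.real_smul, Complex.I_sq]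
    push_cast
    split_ifs <;> ring
  exact ⟨single_mem_of_single_one_mem_of_single_I_mem hi1 hiI z,
    single_mem_of_single_one_mem_of_single_I_mem hj1 hjI z⟩

lemma single_mem_map_gradientAt_basePoint_of_ne (hn : 2 ≤ n) (hij : i ≠ j) {k : σ} (hki : k ≠ i)
    (hkj : k ≠ j) (z : ℂ) :
    Pi.single k z ∈ (homogeneousSubmodule σ ℝ n).map (gradientAt (basePoint i j)) := by
  have hgrad (p r : ℕ) (h : p + r + 1 = n) : Pi.single k (Complex.I ^ r) ∈
      (homogeneousSubmodule σ ℝ n).map (gradientAt (basePoint i j)) :=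
    gradientAt_basePoint_X_pow_mul_X_pow_mul_X hij hki hkj p r ▸ Submodule.mem_map_of_mem
      (h ▸ ((isHomogeneous_X_pow i p).mul (isHomogeneous_X_pow j r)).mul (isHomogeneous_X ℝ k))
  refine single_mem_of_single_one_mem_of_single_I_mem ?_ ?_ z
  · simpa using hgrad (n - 1) 0 (by omega)
  · simpa using hgrad (n - 2) 1 (by omega)

lemma map_gradientAt_basePoint_eq_top [Finite σ] (hn : 3 ≤ n) (hij : i ≠ j) :
    (homogeneousSubmodule σ ℝ n).map (gradientAt (basePoint i j)) = ⊤ := by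
  cases nonempty_fintype σ
  refine Submodule.eq_top_iff'.2 fun v ↦ ?_
  rw [← Finset.univ_sum_single v]
  refine Submodule.sum_mem _ fun k _ ↦ ?_
  rcases eq_or_ne k i with rfl | hki
  · exact (single_mem_map_gradientAt_basePoint_pair hn hij (v k)).1
  rcases eq_or_ne k j with rfl | hkj
  · exact (single_mem_map_gradientAt_basePoint_pair hn hij (v k)).2
  · exact single_mem_map_gradientAt_basePoint_of_ne (by omega) hij hki hkj (v k)

/-- The coefficient vectors of the forms of degree `n` that are singular at `basePoint i j`;
for `n ≠ 0`, Euler's identity makes the vanishing of the gradient sufficient. -/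
def singularForms [Finite σ] (n : ℕ) (i j : σ) : Submodule ℝ (DegreeExponent σ n → ℝ) :=
  LinearMap.ker (gradientAt (basePoint i j) ∘ₗ form n)

lemma finrank_singularForms_add [Fintype σ] (hn : 3 ≤ n) (hij : i ≠ j) :
    Module.finrank ℝ (singularForms n i j) + 2 * Fintype.card σ =
      Module.finrank ℝ (DegreeExponent σ n → ℝ) := by
  have hrange : LinearMap.range (gradientAt (basePoint i j) ∘ₗ form n) = ⊤ := by
    rw [LinearMap.range_comp, range_form, map_gradientAt_basePoint_eq_top hn hij]
  have hdim : Module.finrank ℝ (σ → ℂ) = 2 * Fintype.card σ := by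
    simp [Module.finrank_pi_fintype, mul_comm]
  rw [← hdim, ← finrank_top ℝ (σ → ℂ), ← hrange, singularForms, add_comm]
  exact LinearMap.finrank_range_add_finrank_ker _

end DimensionCount

section Parametrization

variable {σ : Type*} {i j : σ} {n : ℕ}

/-- The real linear form `Re w * x_i + Im w * x_j`, which takes the value `w` at
`basePoint i j`. -/
def realImagForm (i j : σ) : ℂ →ₗ[ℝ] MvPolynomial σ ℝ :=
  Complex.reLm.smulRight (X i) + Complex.imLm.smulRight (X j)

lemma realImagForm_apply (i j : σ) (w : ℂ) : realImagForm i j w = w.re • X i + w.im • X j := rfl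

lemma isHomogeneous_realImagForm (i j : σ) (w : ℂ) : (realImagForm i j w).IsHomogeneous 1 :=
  Submodule.add_mem (homogeneousSubmodule σ ℝ 1)
    (Submodule.smul_mem _ _ (isHomogeneous_X ℝ i)) (Submodule.smul_mem _ _ (isHomogeneous_X ℝ j))

lemma contDiff_coeff_bind₁ {τ V : Type*} [NormedAddCommGroup V] [NormedSpace ℝ V]
    {L : V → σ → MvPolynomial τ ℝ} {k : WithTop ℕ∞}
    (hL : ∀ a d, ContDiff ℝ k fun x ↦ coeff d (L x a)) (P : MvPolynomial σ ℝ) (d : τ →₀ ℕ) :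
    ContDiff ℝ k fun x ↦ coeff d (bind₁ (L x) P) := by
  classical
  induction P using MvPolynomial.induction_on generalizing d with
  | C r =>
    simp only [bind₁_C_right]
    exact contDiff_const
  | add P Q hP hQ =>
    simp only [map_add, coeff_add]
    exact (hP d).add (hQ d)
  | mul_X P a hP =>
    simp only [map_mul, bind₁_X_right, coeff_mul]
    exact ContDiff.sum fun x _ ↦ (hP x.1).mul (hL a x.2)

variable [DecidableEq σ]

/-- The coordinates of a real linear map of `σ → ℂ` that sends `basePoint i j` to `q` and, when
`q i = 1` and `q j` is not real, is invertible. -/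
def realImagSubst (i j : σ) (q : σ → ℂ) (a : σ) : MvPolynomial σ ℝ :=
  realImagForm i j (q a) + if a = i ∨ a = j then 0 else X a

lemma isHomogeneous_realImagSubst (i j : σ) (q : σ → ℂ) (a : σ) :
    (realImagSubst i j q a).IsHomogeneous 1 := by
  refine (isHomogeneous_realImagForm i j (q a)).add ?_
  split_ifs
  exacts [isHomogeneous_zero _ _ _, isHomogeneous_X _ _]

lemma aeval_basePoint_realImagSubst (hij : i ≠ j) (q : σ → ℂ) (a : σ) :
    aeval (basePoint i j) (realImagSubst i j q a) = q a := by
  have hrest : aeval (basePoint i j) (if a = i ∨ a = j then 0 else X a : MvPolynomial σ ℝ) = 0 := by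
    split_ifs with ha
    · exact map_zero _
    · rw [aeval_X, basePoint_of_ne (not_or.1 ha).1 (not_or.1 ha).2]
  simp [realImagSubst, hrest, realImagForm_apply, basePoint_left hij, basePoint_right hij,
    Complex.re_add_im]

lemma bind₁_realImagSubst_realImagForm (z : σ → ℂ) (w : ℂ) :
    bind₁ (realImagSubst i j z) (realImagForm i j w) =
      realImagForm i j (w.re • z i + w.im • z j) := by
  simp only [realImagForm_apply i j w, map_add, map_smul, bind₁_X_right]
  simp [realImagSubst]

lemma bind₁_realImagSubst_bind₁_realImagSubst {q z : σ → ℂ} (hqi : q i = 1) (hzi : z i = 1)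
    (hj : (q j).re + (q j).im * z j = Complex.I)
    (hz : ∀ a, a ≠ i → a ≠ j → (q a).re + (q a).im * z j + z a = 0) (P : MvPolynomial σ ℝ) :
    bind₁ (realImagSubst i j z) (bind₁ (realImagSubst i j q) P) = P := by
  rw [← AlgHom.comp_apply]
  refine DFunLike.congr_fun (g := AlgHom.id ℝ _) (MvPolynomial.algHom_ext fun a ↦ ?_) P
  rw [AlgHom.comp_apply, bind₁_X_right, AlgHom.id_apply, realImagSubst, map_add,
    bind₁_realImagSubst_realImagForm, hzi, Complex.real_smul, Complex.real_smul, mul_one]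
  rcases eq_or_ne a i with rfl | hai
  · simp [hqi, realImagForm_apply]
  rcases eq_or_ne a j with rfl | haj
  · simp [hj, realImagForm_apply]
  · rw [if_neg (not_or.2 ⟨hai, haj⟩), bind₁_X_right, realImagSubst, if_neg (not_or.2 ⟨hai, haj⟩),
      ← add_assoc, ← map_add, hz a hai haj, map_zero, zero_add]

/-- The affine chart `x_i = 1` of the complex projective space. -/
def affineChart (i : σ) (z : {a // a ≠ i} → ℂ) (a : σ) : ℂ :=
  if h : a = i then 1 else z ⟨a, h⟩

lemma affineChart_self (i : σ) (z : {a // a ≠ i} → ℂ) : affineChart i z i = 1 :=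
  dif_pos rfl

lemma affineChart_restrict {q : σ → ℂ} (hq : q i = 1) : affineChart i (fun a ↦ q a) = q := by
  ext a
  by_cases h : a = i
  · rw [h, affineChart_self, hq]
  · exact dif_neg h

lemma exists_bind₁_realImagSubst_affineChart_eq {q : σ → ℂ} (hqi : q i = 1)
    (hqj : (q j).im ≠ 0) :
    ∃ z, ∀ P : MvPolynomial σ ℝ,
      bind₁ (realImagSubst i j (affineChart i z)) (bind₁ (realImagSubst i j q) P) = P := by
  have hji : j ≠ i := by
    rintro rfl
    simp [hqi] at hqj
  let τ : ℂ := (Complex.I - (q j).re) / (q j).im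
  let z (a : σ) : ℂ := if a = i then 1 else if a = j then τ else -((q a).re + (q a).im * τ)
  refine ⟨fun a ↦ z a, fun P ↦ ?_⟩
  rw [affineChart_restrict (q := z) (if_pos rfl)]
  have hzj : z j = τ := by simp [z, hji]
  refine bind₁_realImagSubst_bind₁_realImagSubst hqi (if_pos rfl) ?_ (fun a hai haj ↦ ?_) P
  · rw [hzj, mul_div_cancel₀ _ (Complex.ofReal_ne_zero.2 hqj), add_sub_cancel]
  · rw [hzj, show z a = -((q a).re + (q a).im * τ) by simp [z, hai, haj], add_neg_cancel]

section Finite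

variable [Finite σ]

/-- A parametrized family of forms `P ∘ L`, with `P` singular at `basePoint i j` and `L` as in
`realImagSubst`. Since the inverse of an invertible `L` has the same shape,
the family contains every form singular at a point `q` with `q i = 1` and `q j` not real. -/
def singularFamily (n : ℕ) (i j : σ) (x : singularForms n i j × ({a // a ≠ i} → ℂ)) :
    DegreeExponent σ n → ℝ :=
  formCoeff n (bind₁ (realImagSubst i j (affineChart i x.2)) (form n x.1))

lemma mem_range_singularFamily {c : DegreeExponent σ n → ℝ} {q : σ → ℂ}
    (hq : IsSingularAt (form n c) q) (hqi : q i = 1) (hqj : (q j).im ≠ 0) :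
    c ∈ Set.range (singularFamily n i j) := by
  cases nonempty_fintype σ
  have hij : i ≠ j := by
    rintro rfl
    simp [hqi] at hqj
  obtain ⟨z, hz⟩ := exists_bind₁_realImagSubst_affineChart_eq hqi hqj
  set Q := bind₁ (realImagSubst i j q) (form n c)
  have hQ : form n (formCoeff n Q) = Q := by
    refine form_formCoeff ?_
    have := (isHomogeneous_form c).aeval _ (isHomogeneous_realImagSubst i j q)
    rwa [one_mul] at this
  have hQ_mem : formCoeff n Q ∈ singularForms n i j := by
    have hgrad : gradientAt (basePoint i j) Q = 0 := by
      simp only [Q, gradientAt_bind₁, aeval_basePoint_realImagSubst hij, hq.2, Pi.zero_apply,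
        zero_smul, Finset.sum_const_zero]
    rwa [singularForms, LinearMap.mem_ker, LinearMap.comp_apply, hQ]
  exact ⟨(⟨_, hQ_mem⟩, z), by simp [singularFamily, hQ, Q, hz]⟩

lemma finrank_singularFamily_add_one_lt (hn : 3 ≤ n) (hij : i ≠ j) :
    Module.finrank ℝ (singularForms n i j × ({a // a ≠ i} → ℂ)) + 1 <
      Module.finrank ℝ (DegreeExponent σ n → ℝ) := by
  cases nonempty_fintype σ
  have hparam : Module.finrank ℝ ({a // a ≠ i} → ℂ) = 2 * (Fintype.card σ - 1) := by
    simp [Module.finrank_pi_fintype, mul_comm]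
  have hcard : 0 < Fintype.card σ := Fintype.card_pos_iff.2 ⟨i⟩
  rw [Module.finrank_prod, hparam, ← finrank_singularForms_add hn hij]
  omega

end Finite

variable [Fintype σ]

lemma contDiff_coeff_realImagSubst_affineChart (k : WithTop ℕ∞) (i j a : σ) (d : σ →₀ ℕ) :
    ContDiff ℝ k fun z : {a // a ≠ i} → ℂ ↦ coeff d (realImagSubst i j (affineChart i z) a) := by
  have hchart : ContDiff ℝ k fun z : {a // a ≠ i} → ℂ ↦ affineChart i z a := by
    unfold affineChart
    split_ifs <;> fun_prop
  have hre := Complex.reCLM.contDiff.comp hchart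
  have him := Complex.imCLM.contDiff.comp hchart
  simp only [realImagSubst, realImagForm_apply, coeff_add, coeff_smul, smul_eq_mul]
  exact ((hre.mul contDiff_const).add (him.mul contDiff_const)).add contDiff_const

lemma contDiff_singularFamily (k : WithTop ℕ∞) (n : ℕ) (i j : σ) :
    ContDiff ℝ k (singularFamily n i j) := by
  refine contDiff_pi.2 fun d ↦ ?_
  simp only [singularFamily, form_apply, formCoeff_apply, map_sum, map_smul, coeff_sum, coeff_smul,
    smul_eq_mul]
  refine ContDiff.sum fun e _ ↦ .mul ?_ ?_
  · exact (contDiff_apply ℝ ℝ e).comp ((singularForms n i j).subtypeL.contDiff.comp contDiff_fst)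
  · exact (contDiff_coeff_bind₁ (contDiff_coeff_realImagSubst_affineChart k i j) _ _).comp
      contDiff_snd

end Parametrization

section Main

variable {σ : Type*} {n : ℕ}

lemma exists_im_ne_zero_of_isSingularAt {P : MvPolynomial σ ℝ} (hP : IsSmoothOver ℝ P) {q : σ → ℂ}
    (hq : IsSingularAt P q) (hq0 : q ≠ 0) : ∃ j, (q j).im ≠ 0 := by
  by_contra! hreal
  have hqre : (fun a ↦ algebraMap ℝ ℂ (q a).re) = q :=
    _root_.funext fun a ↦ Complex.ext rfl (hreal a).symm
  have hre : (fun a ↦ (q a).re) = 0 := hP _ (isSingularAt_algebraMap_iff.1 (hqre.symm ▸ hq))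
  exact hq0 (_root_.funext fun a ↦ Complex.ext (congrFun hre a) (hreal a))

variable [Finite σ]

lemma smoothForms_diff_subset [DecidableEq σ] :
    smoothForms σ n ℝ \ smoothForms σ n ℂ ⊆
      ⋃ k : {k : σ × σ // k.1 ≠ k.2}, Set.range (singularFamily n k.1.1 k.1.2) := by
  rintro c ⟨hR, hC⟩
  simp only [smoothForms, IsSmoothOver, Set.mem_ofPred_eq, not_forall] at hC
  obtain ⟨q, hq, hq0⟩ := hC
  obtain ⟨i, hi⟩ := Function.ne_iff.1 hq0
  set q₁ := (q i)⁻¹ • q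
  have hq₁ : IsSingularAt (form n c) q₁ := isSingularAt_smul (isHomogeneous_form c) hq _
  have hq₁i : q₁ i = 1 := inv_mul_cancel₀ hi
  obtain ⟨j, hj⟩ := exists_im_ne_zero_of_isSingularAt hR hq₁ fun h ↦ by simp [h] at hq₁i
  have hij : i ≠ j := by
    rintro rfl
    simp [hq₁i] at hj
  exact Set.mem_iUnion.2 ⟨⟨(i, j), hij⟩, mem_range_singularFamily hq₁ hq₁i hj⟩

variable (σ) in
theorem complexSmooth_dense_in_realSmooth_general (hn : 3 ≤ n) :
    smoothForms σ n ℝ ⊆ closure (smoothForms σ n ℂ) ∧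
    ∀ c ∈ smoothForms σ n ℝ,
      (connectedComponentIn (smoothForms σ n ℝ) c ∩ smoothForms σ n ℂ).Nonempty ∧
      IsConnected (connectedComponentIn (smoothForms σ n ℝ) c ∩ smoothForms σ n ℂ) := by
  classical
  cases nonempty_fintype σ
  set R := smoothForms σ n ℝ
  set G := smoothForms σ n ℂ
  have hRo : IsOpen R := isOpen_smoothForms ℝ
  have hF (k : {k : σ × σ // k.1 ≠ k.2}) := contDiff_singularFamily 1 n k.1.1 k.1.2
  have hP (k : {k : σ × σ // k.1 ≠ k.2}) := finrank_singularFamily_add_one_lt hn k.2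
  have hdense : R ⊆ closure G :=
    (subset_closure_diff_of_subset_iUnion_range hRo hF (fun k ↦ (Nat.lt_succ_self _).trans (hP k))
      smoothForms_diff_subset).trans (closure_mono fun c hc ↦ by_contra fun h ↦ hc.2 ⟨hc.1, h⟩)
  refine ⟨hdense, fun c hc ↦ ?_⟩
  set U := connectedComponentIn R c
  have hUo : IsOpen U := hRo.connectedComponentIn
  have hUR : U ⊆ R := connectedComponentIn_subset R c
  have hcU : c ∈ U := mem_connectedComponentIn hc
  have hUG : U ∩ G = U \ (R \ G) := by
    rw [Set.sdiff_sdiff_right, Set.sdiff_eq_empty.2 hUR, Set.empty_union]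
  have hne : (U ∩ G).Nonempty := mem_closure_iff.1 (hdense hc) U hUo hcU
  refine ⟨hne, hne, hUG ▸ ?_⟩
  exact isPreconnected_diff_of_subset_iUnion_range isPreconnected_connectedComponentIn hUo hF hP
    smoothForms_diff_subset

end Main

section Ternary

variable {n : ℕ} {P : MvPolynomial (Fin 3) ℝ}

lemma realSmooth_iff_isSmoothOver : RealSmooth P ↔ IsSmoothOver ℝ P := by
  simp only [RealSmooth, IsSmoothOver, isSingularAt_iff, aeval_eq_eval]
  grind

lemma complexSmooth_iff_isSmoothOver : ComplexSmooth P ↔ IsSmoothOver ℂ P := by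
  simp only [ComplexSmooth, IsSmoothOver, isSingularAt_iff, pderiv_map, eval_map, aeval_def]
  grind

lemma continuous_coeff (d : Fin 3 →₀ ℕ) :
    Continuous fun P : MvPolynomial (Fin 3) ℝ ↦ coeff d P :=
  (continuous_apply d).comp continuous_induced_dom

lemma continuous_form :
    Continuous (form n : (DegreeExponent (Fin 3) n → ℝ) → MvPolynomial (Fin 3) ℝ) :=
  continuous_induced_rng.2 (continuous_pi continuous_coeff_form)

variable (n) in
/-- Coordinates on the space of ternary forms, for the topology by coefficients. -/
def formHomeomorph : homogeneousSubmodule (Fin 3) ℝ n ≃ₜ (DegreeExponent (Fin 3) n → ℝ) where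
  toFun P := formCoeff n P
  invFun c := ⟨form n c, isHomogeneous_form c⟩
  left_inv P := Subtype.ext (form_formCoeff P.2)
  right_inv := formCoeff_form
  continuous_toFun := continuous_pi fun d ↦ (continuous_coeff d.1).comp continuous_subtype_val
  continuous_invFun := continuous_form.subtype_mk _

lemma form_formHomeomorph (P : homogeneousSubmodule (Fin 3) ℝ n) :
    form n (formHomeomorph n P) = P :=
  form_formCoeff P.2

lemma RSset_eq_preimage : RSset n = formHomeomorph n ⁻¹' smoothForms (Fin 3) n ℝ := by
  ext P
  simp only [RSset, smoothForms, Set.mem_ofPred_eq, Set.mem_preimage, form_formHomeomorph,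
    realSmooth_iff_isSmoothOver, and_iff_right_iff_imp]
  exact ne_zero_of_isSmoothOver

lemma CSset_eq_preimage : CSset n = formHomeomorph n ⁻¹' smoothForms (Fin 3) n ℂ := by
  ext P
  simp only [CSset, smoothForms, Set.mem_ofPred_eq, Set.mem_preimage, form_formHomeomorph,
    complexSmooth_iff_isSmoothOver, and_iff_right_iff_imp]
  exact ne_zero_of_isSmoothOver

end Ternary

/-- **Statement 18.** For `n ≥ 3`: the complex-smooth polynomials are dense in the set of
real-smooth ones; and every connected component of the real-smooth locus contains
complex-smooth points and its set of complex-smooth points is connected — hence each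
connected component of the real-smooth locus determines a unique connected component of
the complex-smooth locus. -/
theorem complexSmooth_dense_in_realSmooth (n : ℕ) (hn : 3 ≤ n) :
    RSset n ⊆ closure (CSset n) ∧
    ∀ Φ ∈ RSset n,
      (connectedComponentIn (RSset n) Φ ∩ CSset n).Nonempty ∧
      IsConnected (connectedComponentIn (RSset n) Φ ∩ CSset n) := by
  obtain ⟨hdense, hconn⟩ := complexSmooth_dense_in_realSmooth_general (Fin 3) hn
  rw [RSset_eq_preimage, CSset_eq_preimage, ← (formHomeomorph n).preimage_closure]
  refine ⟨Set.preimage_mono hdense, fun Φ hΦ ↦ ?_⟩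
  rw [connectedComponentIn_preimage_homeomorph _ hΦ, ← Set.preimage_inter,
    (formHomeomorph n).isConnected_preimage]
  exact ⟨(hconn _ hΦ).1.preimage (formHomeomorph n).surjective, (hconn _ hΦ).2⟩
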